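/- Let n ≥ 2, m ≥ 1, and let 𝔹 be the open unit ball in ℝⁿ. For x ∈ 𝔹 with r = |x|, let 𝒦_{m,n}(x) be the smallest constant such that max_{|ℓ|=1} |(ℓ, ∇)u(x)| ≤ 𝒦_{m,n}(x)·‖g‖_{[L^∞(S^{n−1})]^m} for every u that is the Poisson integral over S^{n−1} of g ∈ [L^∞(S^{n−1})]^m. Then 𝒦_{m,n}(x) = (1/ω_n) sup_{|ℓ|=1} ∫_{S^{n−1}} |( n(1−r²)(y−x) − 2|y−x|² x , ℓ)| / |y−x|^{n+2} dσ_y; in particular 𝒦_{m,n}(x) does not depend on m. -/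

import Mathlib

open MeasureTheory Real Filter Metric
open scoped Real RealInnerProductSpace

noncomputable section

/-- `Eu n` is the Euclidean space `ℝⁿ`. -/
abbrev Eu (n : ℕ) := EuclideanSpace ℝ (Fin n)

/-- `ω_n`: the surface area of the unit sphere `S^{n-1}` in `ℝⁿ`,
given by the classical formula `2 π^{n/2} / Γ(n/2)`. -/
def sphereArea (n : ℕ) : ℝ := 2 * π ^ ((n : ℝ) / 2) / Real.Gamma ((n : ℝ) / 2)

/-- The Poisson integral `u(x) = (1/ωₙ) ∫_{S^{n-1}} ((1-|x|²)/|y-x|ⁿ) g(y) dσ_y` of a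
vector-valued boundary function `g : S^{n-1} → ℝ^m`. -/
def poissonBallV {n m : ℕ} (g : Metric.sphere (0 : Eu n) 1 → Eu m) (x : Eu n) : Eu m :=
  (1 / sphereArea n) • ∫ y : Metric.sphere (0 : Eu n) 1,
    ((1 - ‖x‖ ^ 2) / ‖(y : Eu n) - x‖ ^ n) • g y ∂(volume.toSphere)

/-- The claimed value of the sharp coefficient `𝒦_{m,n}(x)`
(which does not depend on `m`). -/
def Kmn (n : ℕ) (x : Eu n) : ℝ :=
  (1 / sphereArea n) * ⨆ ℓ : Metric.sphere (0 : Eu n) 1,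
    ∫ y : Metric.sphere (0 : Eu n) 1,
      |⟪((n : ℝ) * (1 - ‖x‖ ^ 2)) • ((y : Eu n) - x) - (2 * ‖(y : Eu n) - x‖ ^ 2) • x,
          (ℓ : Eu n)⟫| / ‖(y : Eu n) - x‖ ^ (n + 2)
      ∂volume.toSphere

/-- The numerator vector of the gradient of the Poisson kernel. -/
def gradNum (n : ℕ) (z y : Eu n) : Eu n :=
  ((n : ℝ) * (1 - ‖z‖ ^ 2)) • (y - z) - (2 * ‖y - z‖ ^ 2) • z

/-- The gradient of the Poisson kernel. -/
def gradK (n : ℕ) (z y : Eu n) : Eu n := (‖y - z‖ ^ (n + 2))⁻¹ • gradNum n z y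

lemma hasFDerivAt_kernel {n : ℕ} (hn : 2 ≤ n) (y z : Eu n) (h : y ≠ z) :
    HasFDerivAt (fun z : Eu n => (1 - ‖z‖ ^ 2) / ‖y - z‖ ^ n)
      (innerSL ℝ (gradK n z y)) z := by
  have hpos : 0 < ‖y - z‖ := norm_pos_iff.2 (sub_ne_zero.2 h)
  have h1 : HasFDerivAt (fun z : Eu n => ‖z‖ ^ 2) _ z := (hasFDerivAt_id z).norm_sq
  have h2 : HasFDerivAt (fun z : Eu n => ‖y - z‖ ^ 2) _ z :=
    ((hasFDerivAt_id z).const_sub y).norm_sq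
  have h3 := (h2.sqrt (by positivity))
  simp only [Real.sqrt_sq (norm_nonneg _)] at h3
  have h4 := h3.pow n
  have h5 := (h1.const_sub 1).mul
    ((hasDerivAt_inv (x := ‖y - z‖ ^ n) (by positivity)).comp_hasFDerivAt z h4)
  simp only [div_eq_mul_inv]
  refine h5.congr_fderiv ?_
  ext v
  obtain ⟨k, rfl⟩ : ∃ k, n = k + 1 := ⟨n - 1, by omega⟩
  simp [gradK, gradNum, inner_sub_left, inner_smul_left, real_inner_comm]
  generalize ‖y - z‖ = t at *
  field_simp
  ring

lemma norm_gradK_le {n : ℕ} (z y : Eu n) (hz : ‖z‖ ≤ 1) (hy : ‖y‖ = 1) {ε : ℝ} (hε : 0 < ε)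
    (h : ε ≤ ‖y - z‖) : ‖gradK n z y‖ ≤ (ε ^ (n + 2))⁻¹ * (2 * n + 8) := by
  have h2 : ‖y - z‖ ≤ 2 := (norm_sub_le _ _).trans (by linarith)
  have hz0 := norm_nonneg z
  have hq : ‖z‖ ^ 2 ≤ 1 := by nlinarith
  unfold gradK
  rw [norm_smul, norm_inv, norm_pow, norm_norm]
  refine mul_le_mul (by gcongr) ?_ (norm_nonneg _) (by positivity)
  unfold gradNum
  refine (norm_sub_le _ _).trans ?_
  rw [norm_smul, norm_smul, Real.norm_of_nonneg (mul_nonneg (by positivity) (by linarith)),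
    Real.norm_of_nonneg (by positivity)]
  have a1 : (n : ℝ) * (1 - ‖z‖ ^ 2) * ‖y - z‖ ≤ n * 1 * 2 := by
    gcongr
    nlinarith
  have a2 : 2 * ‖y - z‖ ^ 2 * ‖z‖ ≤ 2 * 2 ^ 2 * 1 := by gcongr
  linarith

lemma dist_lower {n : ℕ} (z : Eu n) (y : Metric.sphere (0 : Eu n) 1) :
    1 - ‖z‖ ≤ ‖(y : Eu n) - z‖ := by
  have := norm_sub_norm_le (y : Eu n) z
  rwa [norm_eq_of_mem_sphere y] at this

lemma continuous_gradK {n : ℕ} (z : Eu n) (hz : ‖z‖ < 1) :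
    Continuous (fun y : Metric.sphere (0 : Eu n) 1 => gradK n z y) := by
  unfold gradK gradNum
  have h1 : Continuous (fun y : Metric.sphere (0 : Eu n) 1 => ‖(y : Eu n) - z‖ ^ (n + 2)) := by
    fun_prop
  have h2 : Continuous (fun y : Metric.sphere (0 : Eu n) 1 =>
      ((n : ℝ) * (1 - ‖z‖ ^ 2)) • ((y : Eu n) - z) - (2 * ‖(y : Eu n) - z‖ ^ 2) • z) := by
    fun_prop
  refine Continuous.smul (Continuous.inv₀ h1 ?_) h2
  intro y
  have := dist_lower z y
  have : 0 < ‖(y : Eu n) - z‖ := by linarith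
  positivity

lemma continuous_kernel {n : ℕ} (z : Eu n) (hz : ‖z‖ < 1) :
    Continuous (fun y : Metric.sphere (0 : Eu n) 1 => (1 - ‖z‖ ^ 2) / ‖(y : Eu n) - z‖ ^ n) := by
  refine Continuous.div (by fun_prop) (by fun_prop) ?_
  intro y
  have := dist_lower z y
  have : 0 < ‖(y : Eu n) - z‖ := by linarith
  positivity

lemma integrable_cont_smul {n m : ℕ} (f : Metric.sphere (0 : Eu n) 1 → ℝ) (hf : Continuous f)
    (g : Metric.sphere (0 : Eu n) 1 → Eu m) (hg : Measurable g)
    (hb : ∀ᵐ y ∂((volume : Measure (Eu n)).toSphere), ‖g y‖ ≤ 1) :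
    Integrable (fun y => f y • g y) (volume : Measure (Eu n)).toSphere := by
  have hi : Integrable f (volume : Measure (Eu n)).toSphere :=
    hf.integrable_of_hasCompactSupport (HasCompactSupport.of_compactSpace f)
  refine hi.norm.mono' (hf.aestronglyMeasurable.smul hg.aestronglyMeasurable) ?_
  filter_upwards [hb] with y hy
  rw [norm_smul]
  exact mul_le_of_le_one_right (norm_nonneg _) hy

lemma hasFDerivAt_poisson {n m : ℕ} (hn : 2 ≤ n) (x : Eu n) (hx : ‖x‖ < 1)
    (g : Metric.sphere (0 : Eu n) 1 → Eu m) (hg : Measurable g)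
    (hb : ∀ᵐ y ∂((volume : Measure (Eu n)).toSphere), ‖g y‖ ≤ 1) (ℓ : Eu n) :
    fderiv ℝ (poissonBallV g) x ℓ = (1 / sphereArea n) •
      ∫ y : Metric.sphere (0 : Eu n) 1, ⟪gradK n x y, ℓ⟫ • g y ∂(volume.toSphere) := by
  set ε := (1 - ‖x‖) / 2 with hε
  have hε0 : 0 < ε := by rw [hε]; linarith
  have hball : ∀ z ∈ Metric.ball x ε, ‖z‖ ≤ 1 - ε := by
    intro z hz
    have := norm_le_norm_add_norm_sub' z x
    rw [mem_ball_iff_norm] at hz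
    linarith
  let F' : Eu n → Metric.sphere (0 : Eu n) 1 → (Eu n →L[ℝ] Eu m) :=
    fun z y => (innerSL ℝ (gradK n z y)).smulRight (g y)
  have hF'm : AEStronglyMeasurable (F' x) (volume : Measure (Eu n)).toSphere := by
    have h1 : AEStronglyMeasurable (fun y : Metric.sphere (0 : Eu n) 1 =>
        innerSL ℝ (gradK n x y)) (volume : Measure (Eu n)).toSphere :=
      ((innerSL ℝ).continuous.comp (continuous_gradK x hx)).aestronglyMeasurable
    have := (ContinuousLinearMap.smulRightL ℝ (Eu n) (Eu m)).aestronglyMeasurable_comp₂ h1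
      hg.aestronglyMeasurable
    exact this
  have hbd : ∀ᵐ y ∂((volume : Measure (Eu n)).toSphere), ∀ z ∈ Metric.ball x ε,
      ‖F' z y‖ ≤ (ε ^ (n + 2))⁻¹ * (2 * n + 8) := by
    filter_upwards [hb] with y hy z hz
    have hz' := hball z hz
    have h1 := norm_gradK_le z y (by linarith) (norm_eq_of_mem_sphere y) hε0
      (by have := dist_lower z y; linarith)
    simp only [F', ContinuousLinearMap.norm_smulRight_apply, innerSL_apply_norm]
    calc _ ≤ ‖gradK n z y‖ * 1 := by gcongr
      _ ≤ _ := by simpa using h1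
  have key := hasFDerivAt_integral_of_dominated_of_fderiv_le
    (μ := (volume : Measure (Eu n)).toSphere)
    (F := fun (z : Eu n) (y : Metric.sphere (0 : Eu n) 1) =>
      ((1 - ‖z‖ ^ 2) / ‖(y : Eu n) - z‖ ^ n) • g y) (F' := F') (x₀ := x)
    (bound := fun _ => (ε ^ (n + 2))⁻¹ * (2 * n + 8)) (Metric.ball_mem_nhds x hε0)
    (by
      filter_upwards [Metric.ball_mem_nhds x hε0] with z hz
      have := hball z hz
      exact (integrable_cont_smul _ (continuous_kernel z (by linarith)) g hg hb).1)
    (integrable_cont_smul _ (continuous_kernel x hx) g hg hb) hF'm hbd (integrable_const _)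
    (by
      refine Eventually.of_forall fun y z hz => ?_
      have hz' := hball z hz
      have hne : (y : Eu n) ≠ z := by
        intro h
        have := norm_eq_of_mem_sphere y
        rw [h] at this
        linarith
      exact (hasFDerivAt_kernel hn (y : Eu n) z hne).smul_const (g y))
  have hint : Integrable (F' x) (volume : Measure (Eu n)).toSphere := by
    refine Integrable.mono' (integrable_const ((ε ^ (n + 2))⁻¹ * (2 * n + 8))) hF'm ?_
    filter_upwards [hbd] with y hy using hy x (Metric.mem_ball_self hε0)
  have key2 := (key.const_smul (1 / sphereArea n)).fderiv
  have e : poissonBallV g = (1 / sphereArea n) • fun z => ∫ y : Metric.sphere (0 : Eu n) 1,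
    ((1 - ‖z‖ ^ 2) / ‖(y : Eu n) - z‖ ^ n) • g y ∂(volume.toSphere) := rfl
  rw [e, key2, _root_.smul_apply, ContinuousLinearMap.integral_apply hint]
  simp [F']

lemma Kmn_eq (n : ℕ) (x : Eu n) : Kmn n x =
  (1 / sphereArea n) * ⨆ ℓ : Metric.sphere (0 : Eu n) 1,
    ∫ y : Metric.sphere (0 : Eu n) 1, |⟪gradK n x y, (ℓ : Eu n)⟫| ∂volume.toSphere := by
  unfold Kmn gradK gradNum
  congr 2
  ext ℓ
  congr 1
  ext y
  rw [real_inner_smul_left, abs_mul,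
    abs_of_nonneg (inv_nonneg.2 (pow_nonneg (norm_nonneg ((y : Eu n) - x)) (n + 2))), div_eq_inv_mul]

/-- For `n ≥ 2`, `m ≥ 1` and `x` in the open unit ball `𝔹 ⊂ ℝⁿ`, the
smallest constant `c` such that `max_{|ℓ|=1} |(ℓ,∇)u(x)| ≤ c ‖g‖_{[L^∞(S^{n-1})]^m}`
for every Poisson integral `u` of `g ∈ [L^∞(S^{n-1})]^m` (equivalently, such that
`|(ℓ,∇)u(x)| ≤ c` for all unit `ℓ` whenever `‖g‖_∞ ≤ 1`) equals
`𝒦_{m,n}(x) = (1/ωₙ) sup_{|ℓ|=1} ∫_{S^{n-1}} |(n(1-r²)(y-x) - 2|y-x|²x, ℓ)|/|y-x|^{n+2} dσ_y`,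
which does not depend on `m`. -/
theorem sharp_directional_derivative_coefficient_ball
    (n m : ℕ) (hn : 2 ≤ n) (hm : 1 ≤ m) (x : Eu n) (hx : x ∈ Metric.ball (0 : Eu n) 1) :
    IsLeast {c : ℝ |
        ∀ g : Metric.sphere (0 : Eu n) 1 → Eu m, Measurable g →
          (∀ᵐ y ∂((volume : Measure (Eu n)).toSphere), ‖g y‖ ≤ 1) →
          ∀ ℓ : Eu n, ‖ℓ‖ = 1 → ‖fderiv ℝ (poissonBallV g) x ℓ‖ ≤ c}
      (Kmn n x) := by
  have hx1 : ‖x‖ < 1 := by simpa using hx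
  have hω : 0 ≤ 1 / sphereArea n := by
    unfold sphereArea
    have : 0 < Real.Gamma ((n : ℝ) / 2) := Real.Gamma_pos_of_pos (by positivity)
    positivity
  have hcont : ∀ ℓ : Eu n, Continuous (fun y : Metric.sphere (0 : Eu n) 1 =>
      ⟪gradK n x y, ℓ⟫) := fun ℓ => (continuous_gradK x hx1).inner continuous_const
  have hint : ∀ ℓ : Eu n, Integrable (fun y : Metric.sphere (0 : Eu n) 1 =>
      |⟪gradK n x y, ℓ⟫|) (volume : Measure (Eu n)).toSphere := fun ℓ =>
    (hcont ℓ).abs.integrable_of_hasCompactSupport (HasCompactSupport.of_compactSpace _)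
  rw [Kmn_eq]
  constructor
  · intro g hg hb ℓ hℓ
    rw [hasFDerivAt_poisson hn x hx1 g hg hb, norm_smul, Real.norm_of_nonneg hω]
    refine mul_le_mul_of_nonneg_left ?_ hω
    have hbdd : BddAbove (Set.range fun ℓ : Metric.sphere (0 : Eu n) 1 =>
        ∫ y : Metric.sphere (0 : Eu n) 1, |⟪gradK n x y, (ℓ : Eu n)⟫| ∂volume.toSphere) := by
      refine ⟨∫ y : Metric.sphere (0 : Eu n) 1, ‖gradK n x y‖ ∂volume.toSphere, ?_⟩
      rintro _ ⟨ℓ, rfl⟩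
      refine integral_mono (hint ℓ) ((continuous_gradK x hx1).norm.integrable_of_hasCompactSupport
        (HasCompactSupport.of_compactSpace _)) fun y => ?_
      refine (abs_real_inner_le_norm _ _).trans ?_
      rw [norm_eq_of_mem_sphere ℓ, mul_one]
    refine le_trans ?_ (le_ciSup hbdd ⟨ℓ, by simpa using hℓ⟩)
    refine norm_integral_le_of_norm_le (hint ℓ) ?_
    filter_upwards [hb] with y hy
    rw [norm_smul, Real.norm_eq_abs]
    exact mul_le_of_le_one_right (abs_nonneg _) hy
  · intro c hc
    have : Nonempty (Metric.sphere (0 : Eu n) 1) :=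
      ⟨⟨EuclideanSpace.single ⟨0, by omega⟩ 1, by simp⟩⟩
    rw [Real.mul_iSup_of_nonneg hω]
    refine ciSup_le fun ℓ => ?_
    let e : Eu m := EuclideanSpace.single ⟨0, by omega⟩ 1
    have he : ‖e‖ = 1 := by simp [e]
    let s : Metric.sphere (0 : Eu n) 1 → ℝ := fun y =>
      if 0 ≤ ⟪gradK n x y, (ℓ : Eu n)⟫ then 1 else -1
    have hs : Measurable s := Measurable.ite
      (measurableSet_le measurable_const (hcont ℓ).measurable) measurable_const measurable_const
    have hg : Measurable fun y => s y • e := hs.smul_const e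
    have hb : ∀ y, ‖s y • e‖ ≤ 1 := by
      intro y
      rw [norm_smul, he]
      simp only [s]
      split_ifs <;> simp
    have h := hc _ hg (Eventually.of_forall hb) ℓ (norm_eq_of_mem_sphere ℓ)
    rw [hasFDerivAt_poisson hn x hx1 _ hg (Eventually.of_forall hb)] at h
    have heq : ∀ y : Metric.sphere (0 : Eu n) 1, ⟪gradK n x y, (ℓ : Eu n)⟫ • s y • e =
        |⟪gradK n x y, (ℓ : Eu n)⟫| • e := by
      intro y
      rw [smul_smul]
      congr 1
      simp only [s]
      split_ifs with h0
      · rw [abs_of_nonneg h0, mul_one]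
      · rw [abs_of_neg (not_le.1 h0)]; ring
    simp only [heq] at h
    rw [integral_smul_const, norm_smul, norm_smul, he, mul_one, Real.norm_of_nonneg hω,
      Real.norm_of_nonneg (integral_nonneg fun y => abs_nonneg _)] at h
    exact h
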